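/- arXiv:2303.07002 — 9 statements merged into one kernel-verified Lean document; each statement's English description precedes it below -/
import Mathlib

section
/- For every s ∈ [s0, s1], the point γ_s satisfies ‖p − γ_s‖² = s; consequently the function s ↦ ‖p − γ_s‖² is strictly increasing on [s0, s1]. -/
/-- For every s ∈ [s0, s1], ‖p − γ_s‖² = s; consequently
s ↦ ‖p − γ_s‖² is strictly increasing on [s0, s1]. -/
theorem stmt_1 {d : ℕ} (V : Set (EuclideanSpace ℝ (Fin d)))
    (hVne : V.Nonempty) (hVcl : IsClosed V) (hVcx : Convex ℝ V)
    (p q phat qhat : EuclideanSpace ℝ (Fin d))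
    (hphat_mem : phat ∈ V) (hphat_min : ∀ y ∈ V, ‖p - phat‖ ≤ ‖p - y‖)
    (hqhat_mem : qhat ∈ V) (hqhat_min : ∀ y ∈ V, ‖q - qhat‖ ≤ ‖q - y‖)
    (s0 s1 : ℝ)
    (hs0 : s0 = ‖p - phat‖ ^ 2) (hs1 : s1 = ‖p - qhat‖ ^ 2)
    (γ : ℝ → EuclideanSpace ℝ (Fin d))
    (hγmem : ∀ s ∈ Set.Icc s0 s1, γ s ∈ V ∩ Metric.closedBall p (Real.sqrt s))
    (hγmin : ∀ s ∈ Set.Icc s0 s1,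
      ∀ y ∈ V ∩ Metric.closedBall p (Real.sqrt s), ‖q - γ s‖ ≤ ‖q - y‖) :
    (∀ s ∈ Set.Icc s0 s1, ‖p - γ s‖ ^ 2 = s) ∧
    StrictMonoOn (fun s => ‖p - γ s‖ ^ 2) (Set.Icc s0 s1) := by
  have key : ∀ s ∈ Set.Icc s0 s1, ‖p - γ s‖ ^ 2 = s := by
    intro s hs
    obtain ⟨hgV, hgB⟩ := hγmem s hs
    have hmin := hγmin s hs
    set g := γ s with hg
    have hs_nonneg : 0 ≤ s := le_trans (by rw [hs0]; positivity) hs.1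
    have hsq : Real.sqrt s ^ 2 = s := Real.sq_sqrt hs_nonneg
    have hle : ‖p - g‖ ≤ Real.sqrt s := by
      rw [Metric.mem_closedBall, dist_comm, dist_eq_norm] at hgB
      exact hgB
    rcases hle.lt_or_eq with hlt | heq
    swap
    · rw [heq, hsq]
    exfalso
    have hqs : Real.sqrt s ≤ ‖p - qhat‖ := by
      apply Real.sqrt_le_iff.2
      exact ⟨norm_nonneg _, by rw [← hs1]; exact hs.2⟩
    have hcont : ContinuousOn (fun t : ℝ => ‖p - ((1 - t) • g + t • qhat)‖) (Set.Icc 0 1) := by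
      fun_prop
    have hivt := intermediate_value_Icc (zero_le_one' ℝ) hcont
    obtain ⟨t, ht, htv⟩ := hivt (show Real.sqrt s ∈ _ from by
      constructor
      · simpa using hle
      · simpa using hqs)
    have htv' : ‖p - ((1 - t) • g + t • qhat)‖ = Real.sqrt s := htv
    have htpos : 0 < t := by
      rcases ht.1.lt_or_eq with h | h
      · exact h
      · subst h
        simp at htv'
        linarith
    have hz := hmin ((1 - t) • g + t • qhat)
      ⟨hVcx hgV hqhat_mem (by linarith [ht.2]) ht.1 (by ring), by
        rw [Metric.mem_closedBall, dist_comm, dist_eq_norm]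
        exact htv'.le⟩
    have hconv : ‖q - ((1 - t) • g + t • qhat)‖ ≤ (1 - t) * ‖q - g‖ + t * ‖q - qhat‖ := by
      have e : q - ((1 - t) • g + t • qhat) = (1 - t) • (q - g) + t • (q - qhat) := by
        module
      rw [e]
      refine (norm_add_le _ _).trans ?_
      rw [norm_smul, norm_smul, Real.norm_of_nonneg ht.1,
        Real.norm_of_nonneg (by linarith [ht.2] : (0 : ℝ) ≤ 1 - t)]
    have h1 : ‖q - g‖ ≤ ‖q - qhat‖ := by
      have : t * ‖q - g‖ ≤ t * ‖q - qhat‖ := by linarith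
      exact le_of_mul_le_mul_left this htpos
    have h2 : ‖q - g‖ = ‖q - qhat‖ := le_antisymm h1 (hqhat_min g hgV)
    have hm := hqhat_min ((1 / 2 : ℝ) • g + (1 / 2 : ℝ) • qhat)
      (hVcx hgV hqhat_mem (by norm_num) (by norm_num) (by norm_num))
    have e2 : (q - g) + (q - qhat) = (2 : ℝ) • (q - ((1 / 2 : ℝ) • g + (1 / 2 : ℝ) • qhat)) := by
      module
    have par := parallelogram_law_with_norm ℝ (q - g) (q - qhat)
    have e3 : (q - g) - (q - qhat) = qhat - g := by abel
    rw [e2, e3, norm_smul, h2, Real.norm_of_nonneg (by norm_num : (0 : ℝ) ≤ 2)] at par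
    have h0 : ‖qhat - g‖ = 0 := by
      have := norm_nonneg (q - qhat)
      have := norm_nonneg (qhat - g)
      nlinarith
    have h4 : qhat = g := sub_eq_zero.1 (norm_eq_zero.1 h0)
    rw [h4] at hqs
    linarith
  refine ⟨key, ?_⟩
  intro a ha b hb hab
  simp only [key a ha, key b hb]
  exact hab
end

section
/- The map γ : [s0, s1] → ℝ^d, s ↦ γ_s, is continuous and injective. -/
section helpers
variable {E : Type*} [NormedAddCommGroup E] [InnerProductSpace ℝ E]

theorem aux_expand (p g h : E) (t : ℝ) :
    ‖p - (g + t • (h - g))‖ ^ 2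
      = ‖p - g‖ ^ 2 - 2 * t * inner ℝ (p - g) (h - g) + t ^ 2 * ‖h - g‖ ^ 2 := by
  rw [← sub_sub, norm_sub_sq_real, inner_smul_right, norm_smul, mul_pow, Real.norm_eq_abs, sq_abs]
  ring

theorem aux_comb (p g h : E) (t : ℝ) :
    ‖p - (g + t • (h - g))‖ ^ 2
      = (1 - t) * ‖p - g‖ ^ 2 + t * ‖p - h‖ ^ 2 - t * (1 - t) * ‖h - g‖ ^ 2 := by
  have h1 := aux_expand p g h t
  have h2 := aux_expand p g h 1
  rw [one_smul, add_sub_cancel] at h2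
  rw [h1, h2]; ring

/-- A point strictly inside the ball is not a minimizer. -/
theorem aux_improve (V : Set E) (hVcx : Convex ℝ V) (p q h : E) (hh : h ∈ V)
    (hmin : ∀ y ∈ V, ‖q - h‖ ≤ ‖q - y‖) (s : ℝ) (hs : s ≤ ‖p - h‖ ^ 2)
    (g : E) (hg : g ∈ V) (hgs : ‖p - g‖ ^ 2 < s) :
    ∃ y ∈ V, ‖p - y‖ ^ 2 ≤ s ∧ ‖q - y‖ < ‖q - g‖ := by
  have hD : 0 < ‖h - g‖ ^ 2 := by
    have : h - g ≠ 0 := by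
      intro h0
      rw [sub_eq_zero] at h0
      subst h0
      linarith
    positivity
  set a := ‖p - g‖ ^ 2
  set b := ‖p - h‖ ^ 2 with hb
  have hab : 0 < b - a := by linarith
  -- half of the admissible step
  obtain ⟨t, ht0, ht1, hts⟩ : ∃ t : ℝ, 0 < t ∧ t < 1 ∧ a + t * (b - a) ≤ s := by
    refine ⟨(s - a) / (b - a) / 2, by have : 0 < s - a := by linarith
                                      positivity, ?_, ?_⟩
    · have : (s - a) / (b - a) ≤ 1 := by rw [div_le_one hab]; linarith
      linarith
    · have : (s - a) / (b - a) / 2 * (b - a) = (s - a) / 2 := by field_simp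
      rw [this]; linarith
  have hpos : 0 < t * (1 - t) * ‖h - g‖ ^ 2 :=
    mul_pos (mul_pos ht0 (by linarith)) hD
  refine ⟨g + t • (h - g), hVcx.add_smul_sub_mem hg hh ⟨ht0.le, ht1.le⟩, ?_, ?_⟩
  · rw [aux_comb]; change (1 - t) * a + t * b - _ ≤ s; linarith
  · apply lt_of_pow_lt_pow_left₀ 2 (norm_nonneg _)
    rw [aux_comb]
    have : ‖q - h‖ ^ 2 ≤ ‖q - g‖ ^ 2 := pow_le_pow_left₀ (norm_nonneg _) (hmin g hg) 2
    nlinarith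

end helpers

/-- The map γ : [s0, s1] → ℝ^d, s ↦ γ_s, is continuous and injective. -/
theorem stmt_2 {d : ℕ} (V : Set (EuclideanSpace ℝ (Fin d)))
    (hVne : V.Nonempty) (hVcl : IsClosed V) (hVcx : Convex ℝ V)
    (p q phat qhat : EuclideanSpace ℝ (Fin d))
    (hphat_mem : phat ∈ V) (hphat_min : ∀ y ∈ V, ‖p - phat‖ ≤ ‖p - y‖)
    (hqhat_mem : qhat ∈ V) (hqhat_min : ∀ y ∈ V, ‖q - qhat‖ ≤ ‖q - y‖)
    (s0 s1 : ℝ)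
    (hs0 : s0 = ‖p - phat‖ ^ 2) (hs1 : s1 = ‖p - qhat‖ ^ 2)
    (γ : ℝ → EuclideanSpace ℝ (Fin d))
    (hγmem : ∀ s ∈ Set.Icc s0 s1, γ s ∈ V ∩ Metric.closedBall p (Real.sqrt s))
    (hγmin : ∀ s ∈ Set.Icc s0 s1,
      ∀ y ∈ V ∩ Metric.closedBall p (Real.sqrt s), ‖q - γ s‖ ≤ ‖q - y‖) :
    ContinuousOn γ (Set.Icc s0 s1) ∧ Set.InjOn γ (Set.Icc s0 s1) := by
  have hmemball : ∀ s ∈ Set.Icc s0 s1, ∀ y, y ∈ Metric.closedBall p (Real.sqrt s) ↔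
      ‖p - y‖ ^ 2 ≤ s := by
    intro s hs y
    have h0 : 0 ≤ s := le_trans (by rw [hs0]; positivity) hs.1
    rw [Metric.mem_closedBall, dist_comm, dist_eq_norm, Real.le_sqrt (norm_nonneg _) h0]
  -- no minimizer lies strictly inside the ball
  have key : ∀ s ∈ Set.Icc s0 s1, ∀ g ∈ V, ‖p - g‖ ^ 2 < s → ‖q - γ s‖ < ‖q - g‖ := by
    intro s hs g hg hgs
    obtain ⟨y, hyV, hys, hyq⟩ := aux_improve V hVcx p q qhat hqhat_mem hqhat_min s
      (hs1 ▸ hs.2) g hg hgs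
    exact lt_of_le_of_lt (hγmin s hs y ⟨hyV, (hmemball s hs y).2 hys⟩) hyq
  have heq : ∀ s ∈ Set.Icc s0 s1, ‖p - γ s‖ ^ 2 = s := by
    intro s hs
    have h1 := hγmem s hs
    rcases ((hmemball s hs _).1 h1.2).lt_or_eq with h | h
    · exact absurd (key s hs _ h1.1 h) (lt_irrefl _)
    · exact h
  have holder : ∀ s ∈ Set.Icc s0 s1, ∀ t ∈ Set.Icc s0 s1, s ≤ t →
      ‖γ t - γ s‖ ^ 2 ≤ t - s := by
    intro s hs t ht hst
    have hC : inner ℝ (p - γ s) (γ t - γ s) ≤ 0 := by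
      by_contra! hC
      set C := inner ℝ (p - γ s) (γ t - γ s)
      set D := ‖γ t - γ s‖ ^ 2 with hD
      have hD0 : 0 ≤ D := by positivity
      obtain ⟨l, hl0, hl1, hlD⟩ : ∃ l : ℝ, 0 < l ∧ l ≤ 1 ∧ l * D ≤ C := by
        have hCD : 0 < C + D := by linarith
        refine ⟨C / (C + D), by positivity, ?_, ?_⟩
        · rw [div_le_one hCD]; linarith
        · rw [div_mul_eq_mul_div, div_le_iff₀ hCD]; nlinarith
      have hyV : γ s + l • (γ t - γ s) ∈ V :=
        hVcx.add_smul_sub_mem (hγmem s hs).1 (hγmem t ht).1 ⟨hl0.le, hl1⟩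
      have hlt := key s hs _ hyV (by
        rw [aux_expand, heq s hs]
        change s - 2 * l * C + l ^ 2 * D < s
        nlinarith [mul_pos hl0 hC, mul_le_mul_of_nonneg_left hlD hl0.le])
      have hqq : ‖q - γ t‖ ≤ ‖q - γ s‖ := hγmin t ht _
        ⟨(hγmem s hs).1, (hmemball t ht _).2 (by rw [heq s hs]; exact hst)⟩
      have h2 : ‖q - γ t‖ ^ 2 ≤ ‖q - γ s‖ ^ 2 := pow_le_pow_left₀ (norm_nonneg _) hqq 2
      have h3 : ‖q - γ s‖ ^ 2 < _ := pow_lt_pow_left₀ hlt (norm_nonneg _) two_ne_zero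
      rw [aux_comb] at h3
      have h4 : 0 ≤ l * (1 - l) * ‖γ t - γ s‖ ^ 2 :=
        mul_nonneg (mul_nonneg hl0.le (by linarith)) hD0
      nlinarith
    have h1 := aux_expand p (γ s) (γ t) 1
    rw [one_smul, add_sub_cancel, heq s hs, heq t ht] at h1
    linarith
  have holder' : ∀ s ∈ Set.Icc s0 s1, ∀ t ∈ Set.Icc s0 s1, ‖γ t - γ s‖ ^ 2 ≤ |t - s| := by
    intro s hs t ht
    rcases le_total s t with h | h
    · exact (holder s hs t ht h).trans (le_abs_self _)
    · rw [norm_sub_rev, abs_sub_comm]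
      exact (holder t ht s hs h).trans (le_abs_self _)
  constructor
  · rw [Metric.continuousOn_iff]
    intro s hs ε hε
    refine ⟨ε ^ 2, by positivity, fun t ht hd => ?_⟩
    rw [dist_eq_norm]
    apply lt_of_pow_lt_pow_left₀ 2 hε.le
    rw [Real.dist_eq] at hd
    exact (holder' s hs t ht).trans_lt hd
  · intro s hs t ht h
    rw [← heq s hs, ← heq t ht, h]
end

section
/- Bridge lemma, first part: for every point x of the bridge of (V, p, q), setting s := ‖x − p‖², one has s0 ≤ s ≤ s1 and x = γ_s. In particular, the bridge is contained in the image of the minimizing path γ. -/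
/-- Bridge lemma, first part. For every point x of the bridge V ∩ [p,q],
setting s := ‖x − p‖², one has s0 ≤ s ≤ s1 and x = γ_s; in particular the bridge is
contained in the image of the minimizing path γ. -/
theorem stmt_7 {d : ℕ} (V : Set (EuclideanSpace ℝ (Fin d)))
    (hVne : V.Nonempty) (hVcl : IsClosed V) (hVcx : Convex ℝ V)
    (p q phat qhat : EuclideanSpace ℝ (Fin d))
    (hphat_mem : phat ∈ V) (hphat_min : ∀ y ∈ V, ‖p - phat‖ ≤ ‖p - y‖)
    (hqhat_mem : qhat ∈ V) (hqhat_min : ∀ y ∈ V, ‖q - qhat‖ ≤ ‖q - y‖)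
    (s0 s1 : ℝ)
    (hs0 : s0 = ‖p - phat‖ ^ 2) (hs1 : s1 = ‖p - qhat‖ ^ 2)
    (γ : ℝ → EuclideanSpace ℝ (Fin d))
    (hγmem : ∀ s ∈ Set.Icc s0 s1, γ s ∈ V ∩ Metric.closedBall p (Real.sqrt s))
    (hγmin : ∀ s ∈ Set.Icc s0 s1,
      ∀ y ∈ V ∩ Metric.closedBall p (Real.sqrt s), ‖q - γ s‖ ≤ ‖q - y‖) :
    (∀ x ∈ V ∩ segment ℝ p q,
      s0 ≤ ‖x - p‖ ^ 2 ∧ ‖x - p‖ ^ 2 ≤ s1 ∧ x = γ (‖x - p‖ ^ 2)) ∧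
    V ∩ segment ℝ p q ⊆ γ '' Set.Icc s0 s1 := by
  have key : ∀ x ∈ V ∩ segment ℝ p q,
      s0 ≤ ‖x - p‖ ^ 2 ∧ ‖x - p‖ ^ 2 ≤ s1 ∧ x = γ (‖x - p‖ ^ 2) := by
    rintro x ⟨hxV, hx⟩
    rw [segment_eq_image_lineMap] at hx
    obtain ⟨t, ⟨ht0, ht1⟩, rfl⟩ := hx
    set x := AffineMap.lineMap p q t with hxdef
    have hpx : dist p x = t * dist p q := by
      rw [hxdef, dist_left_lineMap, Real.norm_of_nonneg ht0]
    have hxq : dist x q = (1 - t) * dist p q := by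
      rw [hxdef, dist_lineMap_right, Real.norm_of_nonneg (by linarith)]
    have h0 : s0 ≤ ‖x - p‖ ^ 2 := by
      rw [hs0, norm_sub_rev x p]
      exact pow_le_pow_left₀ (norm_nonneg _) (hphat_min x hxV) 2
    have h1 : ‖x - p‖ ^ 2 ≤ s1 := by
      rw [hs1, norm_sub_rev x p]
      refine pow_le_pow_left₀ (norm_nonneg _) ?_ 2
      have h := hqhat_min x hxV
      rw [← dist_eq_norm, ← dist_eq_norm] at h ⊢
      have h2 := dist_triangle p qhat q
      rw [dist_comm q qhat, dist_comm q x] at h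
      linarith
    refine ⟨h0, h1, ?_⟩
    have hm := (hγmem _ ⟨h0, h1⟩).2
    have hmin := hγmin _ ⟨h0, h1⟩ x ⟨hxV, by
      rw [Real.sqrt_sq (norm_nonneg _), Metric.mem_closedBall, dist_eq_norm]⟩
    rw [Real.sqrt_sq (norm_nonneg _), Metric.mem_closedBall] at hm
    generalize γ (‖x - p‖ ^ 2) = g at hm hmin ⊢
    rw [← dist_eq_norm] at hm
    rw [← dist_eq_norm, ← dist_eq_norm] at hmin
    rw [dist_comm g p, dist_comm x p] at hm
    rw [dist_comm q g, dist_comm q x] at hmin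
    have h3 := dist_triangle p g q
    exact (eq_lineMap_of_dist_eq_mul_of_dist_eq_mul (by linarith) (by linarith)).symm
  refine ⟨key, fun x hx => ?_⟩
  obtain ⟨h0, h1, h2⟩ := key x hx
  exact ⟨_, ⟨h0, h1⟩, h2.symm⟩
end

section
/- Bridge lemma, second part: for every s ∈ [s0, s1], if γ_s lies in the topological interior of V, then γ_s lies on the segment [p, q], hence on the bridge of (V, p, q). -/
/-- Bridge lemma, second part. For every s ∈ [s0, s1], if γ_s lies in the
topological interior of V, then γ_s lies on the segment [p, q], hence on the bridge
V ∩ [p, q] of (V, p, q). -/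
theorem stmt_8 {d : ℕ} (V : Set (EuclideanSpace ℝ (Fin d)))
    (hVne : V.Nonempty) (hVcl : IsClosed V) (hVcx : Convex ℝ V)
    (p q phat qhat : EuclideanSpace ℝ (Fin d))
    (hphat_mem : phat ∈ V) (hphat_min : ∀ y ∈ V, ‖p - phat‖ ≤ ‖p - y‖)
    (hqhat_mem : qhat ∈ V) (hqhat_min : ∀ y ∈ V, ‖q - qhat‖ ≤ ‖q - y‖)
    (s0 s1 : ℝ)
    (hs0 : s0 = ‖p - phat‖ ^ 2) (hs1 : s1 = ‖p - qhat‖ ^ 2)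
    (γ : ℝ → EuclideanSpace ℝ (Fin d))
    (hγmem : ∀ s ∈ Set.Icc s0 s1, γ s ∈ V ∩ Metric.closedBall p (Real.sqrt s))
    (hγmin : ∀ s ∈ Set.Icc s0 s1,
      ∀ y ∈ V ∩ Metric.closedBall p (Real.sqrt s), ‖q - γ s‖ ≤ ‖q - y‖) :
    ∀ s ∈ Set.Icc s0 s1, γ s ∈ interior V →
      γ s ∈ segment ℝ p q ∧ γ s ∈ V ∩ segment ℝ p q := by
  intro s hs hint
  suffices h : γ s ∈ segment ℝ p q from ⟨h, (hγmem s hs).1, h⟩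
  have hmem := hγmem s hs
  have hmin := hγmin s hs
  generalize γ s = g at *
  have hr : 0 ≤ Real.sqrt s := Real.sqrt_nonneg s
  generalize Real.sqrt s = r at *
  -- `g` is a global minimizer over the ball, by convexity
  have hloc : IsLocalMinOn (fun z => dist z q) (Metric.closedBall p r) g := by
    have hV : V ∈ nhds g := mem_interior_iff_mem_nhds.1 hint
    have h1 : ∀ᶠ y in nhdsWithin g (Metric.closedBall p r), y ∈ V :=
      nhdsWithin_le_nhds hV
    filter_upwards [h1, self_mem_nhdsWithin] with y hy hyB
    have := hmin y ⟨hy, hyB⟩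
    rw [dist_comm g, dist_comm y, dist_eq_norm, dist_eq_norm]
    exact this
  have hglob : IsMinOn (fun z => dist z q) (Metric.closedBall p r) g :=
    IsMinOn.of_isLocalMinOn_of_convexOn hmem.2 hloc
      (convexOn_dist q (convex_closedBall p r))
  have hg : dist g p ≤ r := hmem.2
  by_cases hq : dist q p ≤ r
  · have h0 : dist g q ≤ dist q q := hglob (show q ∈ Metric.closedBall p r from hq)
    rw [dist_self] at h0
    have : g = q := dist_le_zero.1 h0
    rw [this]
    exact right_mem_segment ℝ p q
  · push Not at hq
    have hD : 0 < dist p q := by rw [dist_comm]; exact lt_of_le_of_lt hr hq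
    have hy1 : dist (AffineMap.lineMap p q (r / dist p q)) p = r := by
      rw [dist_lineMap_left, Real.norm_of_nonneg (div_nonneg hr hD.le)]
      field_simp
    have hy2 : dist (AffineMap.lineMap p q (r / dist p q)) q = dist p q - r := by
      have : r / dist p q ≤ 1 := by
        rw [div_le_one hD, dist_comm]; exact hq.le
      rw [dist_lineMap_right, Real.norm_of_nonneg (by linarith)]
      field_simp
    have h0 := hglob (show AffineMap.lineMap p q (r / dist p q) ∈ Metric.closedBall p r from hy1.le)
    have h1 : dist g q ≤ dist p q - r := by
      rw [← hy2]; exact h0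
    have h2 : dist p g + dist g q = dist p q := by
      apply le_antisymm
      · rw [dist_comm p g]; linarith
      · exact dist_triangle _ _ _
    rw [← affineSegment_eq_segment]
    exact dist_add_dist_eq_iff.1 h2
end

section
/- Let d ≥ 2, let p ≠ q in ℝ^d, let ρ > 0, and let S be the sphere of radius ρ centered at p. If x ∈ S is a local minimum of the function y ↦ ‖y − q‖ restricted to S (i.e., there is a neighborhood U of x in ℝ^d with ‖x − q‖ ≤ ‖y − q‖ for all y ∈ S ∩ U), then x = p + ρ·(q − p)/‖q − p‖. -/
open Filter Topology in
lemma aux_curve {E : Type*} [NormedAddCommGroup E] [InnerProductSpace ℝ E]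
    (p q : E) (ρ : ℝ) (x : E) (hx : ‖x - p‖ = ρ)
    (U : Set E) (hU : U ∈ nhds x)
    (hmin : ∀ y ∈ Metric.sphere p ρ ∩ U, ‖x - q‖ ≤ ‖y - q‖)
    (e : E) (he : ‖e‖ = ρ) (hue : inner ℝ (x - p) e = 0) :
    ∀ᶠ t : ℝ in 𝓝 0, t * inner ℝ e (q - p) ≤ t ^ 2 * inner ℝ (x - p) (q - p) := by
  have hc : Continuous (fun t : ℝ => p + (((1 - t ^ 2) / (1 + t ^ 2)) • (x - p)
      + ((2 * t) / (1 + t ^ 2)) • e)) := by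
    have h : ∀ t : ℝ, 1 + t ^ 2 ≠ 0 := fun t => by positivity
    have h1 : Continuous (fun t : ℝ => (1 - t ^ 2) / (1 + t ^ 2)) :=
      Continuous.div (by fun_prop) (by fun_prop) h
    have h2 : Continuous (fun t : ℝ => (2 * t) / (1 + t ^ 2)) :=
      Continuous.div (by fun_prop) (by fun_prop) h
    fun_prop
  have hU' := hc.tendsto 0
  simp only [ne_eq, OfNat.ofNat_ne_zero, not_false_eq_true, zero_pow, sub_zero, add_zero,
    div_one, one_smul, mul_zero, zero_smul, add_sub_cancel] at hU'
  filter_upwards [hU' hU] with t ht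
  have hpos : 0 < 1 + t ^ 2 := by positivity
  set α := (1 - t ^ 2) / (1 + t ^ 2) with hα
  set β := (2 * t) / (1 + t ^ 2) with hβ
  have hab : α ^ 2 + β ^ 2 = 1 := by rw [hα, hβ]; field_simp; ring
  set w := α • (x - p) + β • e with hw
  have hw2 : ‖w‖ ^ 2 = ρ ^ 2 := by
    rw [hw, norm_add_sq_real, norm_smul, norm_smul, inner_smul_left, inner_smul_right, hue,
      mul_pow, mul_pow, hx, he]
    simp only [Real.norm_eq_abs, sq_abs]
    linear_combination ρ ^ 2 * hab
  have hρ : 0 ≤ ρ := hx ▸ norm_nonneg _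
  have hwn : ‖w‖ = ρ := by
    rwa [sq_eq_sq₀ (norm_nonneg _) hρ] at hw2
  have h1 := hmin (p + w) ⟨by simp [hwn], ht⟩
  have h2 : ‖x - q‖ ^ 2 ≤ ‖p + w - q‖ ^ 2 := by gcongr
  rw [show x - q = (x - p) - (q - p) by abel, show p + w - q = w - (q - p) by abel,
    norm_sub_sq_real (x - p), norm_sub_sq_real w, hwn, hx, hw, inner_add_left, inner_smul_left,
    inner_smul_left] at h2
  simp only [conj_trivial] at h2
  generalize inner ℝ (x - p) (q - p) = a at *
  generalize inner ℝ e (q - p) = b at *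
  have h3 : α * a + β * b ≤ a := by linarith
  have h4 : (1 + t ^ 2) * (α * a + β * b) = (1 - t ^ 2) * a + 2 * t * b := by
    rw [hα, hβ]; field_simp
  have h5 := mul_le_mul_of_nonneg_left h3 hpos.le
  linarith

open Filter Topology in
lemma aux_le (a b : ℝ) (h : ∀ᶠ t : ℝ in 𝓝 0, t * b ≤ t ^ 2 * a) : b ≤ 0 := by
  have ht : Tendsto (fun t : ℝ => t * a) (𝓝[>] 0) (𝓝 0) := by
    have : Tendsto (fun t : ℝ => t * a) (𝓝 0) (𝓝 (0 * a)) := Continuous.tendsto (by fun_prop) 0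
    rw [zero_mul] at this
    exact this.mono_left nhdsWithin_le_nhds
  refine ge_of_tendsto ht ?_
  filter_upwards [h.filter_mono nhdsWithin_le_nhds, self_mem_nhdsWithin] with t h1 h2
  have h2 : 0 < t := h2
  exact le_of_mul_le_mul_left (by linarith [h1, sq t, mul_assoc t t a, congrArg (· * a) (sq t)]) h2

open Filter Topology in
lemma aux_nonneg (a : ℝ) (h : ∀ᶠ t : ℝ in 𝓝 0, t * 0 ≤ t ^ 2 * a) : 0 ≤ a := by
  have h' : ∀ᶠ t : ℝ in 𝓝[>] 0, t * 0 ≤ t ^ 2 * a := h.filter_mono nhdsWithin_le_nhds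
  obtain ⟨t, h1, h2⟩ := (h'.and self_mem_nhdsWithin).exists
  have h2 : 0 < t := h2
  exact le_of_mul_le_mul_left (by linarith) (pow_pos h2 2)

/-- On the sphere S of radius ρ > 0 centered at p (in ℝ^d, d ≥ 2, p ≠ q),
any local minimum x of y ↦ ‖y − q‖ restricted to S equals p + ρ·(q − p)/‖q − p‖. -/
theorem stmt_10 {d : ℕ} (hd : 2 ≤ d)
    (p q : EuclideanSpace ℝ (Fin d)) (hpq : p ≠ q) (ρ : ℝ) (hρ : 0 < ρ)
    (x : EuclideanSpace ℝ (Fin d)) (hx : x ∈ Metric.sphere p ρ)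
    (U : Set (EuclideanSpace ℝ (Fin d))) (hU : U ∈ nhds x)
    (hmin : ∀ y ∈ Metric.sphere p ρ ∩ U, ‖x - q‖ ≤ ‖y - q‖) :
    x = p + (ρ / ‖q - p‖) • (q - p) := by
  have hx' : ‖x - p‖ = ρ := by simpa [dist_eq_norm] using hx
  have key := aux_curve p q ρ x hx' U hU hmin
  have hv : q - p ≠ 0 := sub_ne_zero.2 hpq.symm
  have hxu : x = p + (x - p) := by abel
  generalize x - p = u at *
  generalize q - p = v at *
  have hb : ∀ e : EuclideanSpace ℝ (Fin d), ‖e‖ = ρ → inner ℝ u e = 0 → inner ℝ e v = 0 := by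
    intro e he hue
    have h1 := aux_le _ _ (key e he hue)
    have h2 := aux_le _ _ (key (-e) (by simpa using he) (by simpa using hue))
    rw [inner_neg_left] at h2
    linarith
  -- normalisation
  have hn : ∀ e : EuclideanSpace ℝ (Fin d), e ≠ 0 → inner ℝ u e = 0 →
      ‖(ρ / ‖e‖) • e‖ = ρ ∧ inner ℝ u ((ρ / ‖e‖) • e) = 0 := by
    intro e he hue
    have : ‖e‖ ≠ 0 := norm_ne_zero_iff.2 he
    refine ⟨?_, by rw [inner_smul_right, hue, mul_zero]⟩
    rw [norm_smul, Real.norm_eq_abs, abs_of_nonneg (by positivity)]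
    field_simp
  have ha : 0 ≤ inner ℝ u v := by
    obtain ⟨e, he, hue⟩ : ∃ e : EuclideanSpace ℝ (Fin d), e ≠ 0 ∧ inner ℝ u e = 0 := by
      have hne : (ℝ ∙ u)ᗮ ≠ ⊥ := by
        intro h
        rw [Submodule.orthogonal_eq_bot_iff] at h
        have h1 := finrank_span_le_card (R := ℝ) ({u} : Set (EuclideanSpace ℝ (Fin d)))
        rw [h, finrank_top, finrank_euclideanSpace] at h1
        simp at h1
        omega
      obtain ⟨e, he, he0⟩ := Submodule.exists_mem_ne_zero_of_ne_bot hne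
      exact ⟨e, he0, Submodule.mem_orthogonal_singleton_iff_inner_right.1 he⟩
    obtain ⟨h1, h2⟩ := hn e he hue
    have h3 := key _ h1 h2
    rw [hb _ h1 h2] at h3
    exact aux_nonneg _ h3
  have huu : inner ℝ u u = ρ ^ 2 := by rw [real_inner_self_eq_norm_sq, hx']
  have hpar : v = (inner ℝ u v / ρ ^ 2) • u := by
    by_contra hne
    have he : v - (inner ℝ u v / ρ ^ 2) • u ≠ 0 := sub_ne_zero.2 hne
    have hue : inner ℝ u (v - (inner ℝ u v / ρ ^ 2) • u) = 0 := by
      rw [inner_sub_right, inner_smul_right, huu]; field_simp; ring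
    obtain ⟨h1, h2⟩ := hn _ he hue
    have h3 := hb _ h1 h2
    generalize hE : v - (inner ℝ u v / ρ ^ 2) • u = e at *
    have hve : v = e + (inner ℝ u v / ρ ^ 2) • u := by rw [← hE]; abel
    have : ‖e‖ ≠ 0 := norm_ne_zero_iff.2 he
    rw [inner_smul_left, hve, inner_add_right, inner_smul_right, real_inner_comm u e, hue,
      real_inner_self_eq_norm_sq] at h3
    rw [mul_zero, add_zero, conj_trivial] at h3
    have h4 : 0 < ‖e‖ := norm_pos_iff.2 he
    have h5 : 0 < ρ / ‖e‖ * ‖e‖ ^ 2 := by positivity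
    exact h5.ne' h3
  generalize inner ℝ u v = a at *
  have ha0 : a ≠ 0 := by rintro rfl; apply hv; rw [hpar]; simp
  have hnv : ‖v‖ = a / ρ := by
    rw [hpar, norm_smul, hx', Real.norm_eq_abs, abs_of_nonneg (by positivity)]
    field_simp
  rw [hnv, hpar, smul_smul, show ρ / (a / ρ) * (a / ρ ^ 2) = 1 by field_simp, one_smul]
  exact hxu
end

section
/- Anti-bridge lemma, first part: for every point x of the anti-bridge of (V, p, q), setting s := ‖x − p‖², the point x maximizes the distance to q over V ∩ B_s(p); that is, ‖y − q‖ ≤ ‖x − q‖ for every y ∈ V ∩ B_s(p). -/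
/-- Anti-bridge lemma, first part. For every point x of the anti-bridge
V ∩ {p + t(p − q) : t ≥ 0} of (V, p, q), setting s := ‖x − p‖², the point x maximizes
the distance to q over V ∩ B_s(p). -/
theorem stmt_12 {d : ℕ} (V : Set (EuclideanSpace ℝ (Fin d)))
    (hVne : V.Nonempty) (hVcl : IsClosed V) (hVcx : Convex ℝ V)
    (p q : EuclideanSpace ℝ (Fin d)) (hpq : p ≠ q)
    (x : EuclideanSpace ℝ (Fin d)) (hxV : x ∈ V)
    (t : ℝ) (ht : 0 ≤ t) (hxray : x = p + t • (p - q)) :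
    ∀ y ∈ V ∩ Metric.closedBall p (Real.sqrt (‖x - p‖ ^ 2)), ‖y - q‖ ≤ ‖x - q‖ := by
  rintro y ⟨-, hy⟩
  rw [Metric.mem_closedBall, Real.sqrt_sq (norm_nonneg _), dist_eq_norm] at hy
  have h1 : x - p = t • (p - q) := by rw [hxray]; abel
  have h2 : x - q = (t + 1) • (p - q) := by rw [hxray, add_smul, one_smul]; abel
  rw [h1, norm_smul, Real.norm_of_nonneg ht] at hy
  rw [h2, norm_smul, Real.norm_of_nonneg (by linarith)]
  have h3 : ‖y - q‖ ≤ ‖y - p‖ + ‖p - q‖ := norm_sub_le_norm_sub_add_norm_sub y p q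
  linarith
end

section
/- Anti-bridge lemma, second part: assume d ≥ 2 and let s ≥ 0. If x ∈ V ∩ B_s(p) satisfies ‖y − q‖ ≤ ‖x − q‖ for all y ∈ V ∩ B_s(p), and x lies in the topological interior of V, then x = p + √s·(p − q)/‖p − q‖; in particular, x lies on the anti-bridge of (V, p, q). -/
open Filter Topology in
/-- First-order information from rotating `w` towards an orthogonal vector `v`. -/
theorem rot_aux {E : Type*} [NormedAddCommGroup E] [InnerProductSpace ℝ E]
    (w u v : E) (r : ℝ) (hr : 0 < r) (hw : ‖w‖ = r)
    (hloc : ∀ᶠ y in 𝓝 w, ‖y‖ ≤ r → ‖y + u‖ ≤ ‖w + u‖)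
    (hv : inner ℝ w v = 0) :
    ∀ᶠ t : ℝ in 𝓝 0, t * r ^ 2 * inner ℝ v u ≤ t ^ 2 * ‖v‖ ^ 2 * inner ℝ w u := by
  set k := ‖v‖ with hk
  have hD : ∀ t : ℝ, 0 < r ^ 2 + t ^ 2 * k ^ 2 := fun t => by positivity
  let f : ℝ → E := fun t =>
    ((r ^ 2 - t ^ 2 * k ^ 2) / (r ^ 2 + t ^ 2 * k ^ 2)) • w +
      (2 * t * r ^ 2 / (r ^ 2 + t ^ 2 * k ^ 2)) • v
  have hf0 : f 0 = w := by
    have : r ≠ 0 := hr.ne'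
    simp [f, this]
  have hfc : Continuous f := by
    refine Continuous.add (Continuous.smul (Continuous.div (by fun_prop) (by fun_prop)
      fun t => (hD t).ne') continuous_const) (Continuous.smul (Continuous.div (by fun_prop)
      (by fun_prop) fun t => (hD t).ne') continuous_const)
  have ht : Tendsto f (𝓝 0) (𝓝 w) := by
    have := hfc.tendsto 0
    rwa [hf0] at this
  filter_upwards [ht.eventually hloc] with t hft
  have hDt := hD t
  have hnorm : ‖f t‖ ^ 2 = r ^ 2 := by
    simp only [f]
    rw [norm_add_sq_real, norm_smul, norm_smul, mul_pow, mul_pow, inner_smul_left,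
      inner_smul_right, hv, hw, ← hk, Real.norm_eq_abs, Real.norm_eq_abs, sq_abs, sq_abs]
    field_simp
    ring
  have hn : ‖f t‖ ≤ r := by
    nlinarith [norm_nonneg (f t)]
  have h1 := hft hn
  have h2 : ‖f t + u‖ ^ 2 ≤ ‖w + u‖ ^ 2 := by gcongr
  rw [norm_add_sq_real (f t) u, norm_add_sq_real w u, hnorm, hw] at h2
  have h3 : inner ℝ (f t) u ≤ inner ℝ w u := by linarith
  simp only [f, inner_add_left, real_inner_smul_left] at h3
  have h4 := mul_le_mul_of_nonneg_right h3 hDt.le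
  have h5 : ((r ^ 2 - t ^ 2 * k ^ 2) / (r ^ 2 + t ^ 2 * k ^ 2) * inner ℝ w u +
      2 * t * r ^ 2 / (r ^ 2 + t ^ 2 * k ^ 2) * inner ℝ v u) * (r ^ 2 + t ^ 2 * k ^ 2)
      = (r ^ 2 - t ^ 2 * k ^ 2) * inner ℝ w u + 2 * t * r ^ 2 * inner ℝ v u := by
    field_simp
  rw [h5] at h4
  linarith

/-- A two-dimensional space has a nonzero vector orthogonal to a given one. -/
theorem exists_orth {d : ℕ} (hd : 2 ≤ d) (w : EuclideanSpace ℝ (Fin d)) :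
    ∃ v : EuclideanSpace ℝ (Fin d), v ≠ 0 ∧ inner ℝ w v = 0 := by
  have h := Submodule.finrank_add_finrank_orthogonal (Submodule.span ℝ {w})
  rw [finrank_euclideanSpace_fin] at h
  have h1 : Module.finrank ℝ (Submodule.span ℝ {w}) ≤ 1 := by
    simpa using finrank_span_le_card (R := ℝ) ({w} : Set (EuclideanSpace ℝ (Fin d)))
  have h2 : (Submodule.span ℝ {w})ᗮ ≠ ⊥ := by
    intro h0
    rw [h0, finrank_bot] at h
    omega
  obtain ⟨v, hv, hv0⟩ := Submodule.exists_mem_ne_zero_of_ne_bot h2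
  exact ⟨v, hv0, Submodule.mem_orthogonal_singleton_iff_inner_right.1 hv⟩

open Filter Topology in
theorem core_aux {d : ℕ} (hd : 2 ≤ d) (w u : EuclideanSpace ℝ (Fin d)) (hu : u ≠ 0)
    (r : ℝ) (hw : ‖w‖ ≤ r)
    (hloc : ∀ᶠ y in 𝓝 w, ‖y‖ ≤ r → ‖y + u‖ ≤ ‖w + u‖) :
    w = (r / ‖u‖) • u := by
  rcases (norm_nonneg w |>.trans hw).eq_or_lt with h0 | hr
  · subst h0
    simpa using hw
  have hwr : ‖w‖ = r := by
    by_contra hne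
    have hlt : ‖w‖ < r := lt_of_le_of_ne hw hne
    have hball : ∀ᶠ y in 𝓝 w, ‖y‖ < r := continuous_norm.continuousAt.eventually_lt_const hlt
    have hl : ∀ᶠ y in 𝓝 w, ‖y + u‖ ≤ ‖w + u‖ := by
      filter_upwards [hball, hloc] with y h1 h2 using h2 h1.le
    have hp : Tendsto (fun t : ℝ => w + t • u) (𝓝 0) (𝓝 w) := by
      have : Continuous (fun t : ℝ => w + t • u) := by fun_prop
      simpa using this.tendsto 0
    have hm : Tendsto (fun t : ℝ => w - t • u) (𝓝 0) (𝓝 w) := by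
      have : Continuous (fun t : ℝ => w - t • u) := by fun_prop
      simpa using this.tendsto 0
    have hev := ((hp.eventually hl).and (hm.eventually hl)).filter_mono
      (nhdsWithin_le_nhds (s := Set.Ioi (0 : ℝ)))
    obtain ⟨t, ⟨h1, h2⟩, ht⟩ := (hev.and self_mem_nhdsWithin).exists
    have ht : 0 < t := ht
    have h3 := parallelogram_law_with_norm ℝ (w + u) (t • u)
    have e1 : w + u + t • u = w + t • u + u := by abel
    have e2 : w + u - t • u = w - t • u + u := by abel
    rw [e1, e2] at h3
    have : 0 < ‖t • u‖ := norm_pos_iff.2 (smul_ne_zero ht.ne' hu)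
    nlinarith [norm_nonneg (w + t • u + u), norm_nonneg (w - t • u + u)]
  obtain ⟨v, hv0, hv⟩ := exists_orth hd w
  have ha : 0 ≤ inner ℝ w u := by
    have h1 := rot_aux w u v r hr hwr hloc hv
    have h2 := rot_aux w u (-v) r hr hwr hloc (by simp [hv])
    obtain ⟨t, ⟨h1, h2⟩, ht⟩ := (((h1.and h2).filter_mono
      (nhdsWithin_le_nhds (s := Set.Ioi (0 : ℝ)))).and self_mem_nhdsWithin).exists
    have ht : 0 < t := ht
    rw [inner_neg_left, norm_neg] at h2
    have : 0 < ‖v‖ := norm_pos_iff.2 hv0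
    have h3 : 0 ≤ t ^ 2 * ‖v‖ ^ 2 * inner ℝ w u := by linarith
    exact nonneg_of_mul_nonneg_right h3 (by positivity)
  set a : ℝ := inner ℝ w u with hadef
  have hww : inner ℝ w w = r ^ 2 := by rw [real_inner_self_eq_norm_sq, hwr]
  set z := u - (a / r ^ 2) • w with hz
  have hwz : inner ℝ w z = 0 := by
    rw [hz, inner_sub_right, real_inner_smul_right, hww, ← hadef]
    field_simp
    ring
  have hzu : inner ℝ z u = ‖z‖ ^ 2 := by
    have : u = z + (a / r ^ 2) • w := by rw [hz]; abel
    have hzw : inner ℝ z w = 0 := by rw [real_inner_comm]; exact hwz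
    calc inner ℝ z u = inner ℝ z (z + (a / r ^ 2) • w) := by rw [← this]
      _ = ‖z‖ ^ 2 := by
        rw [inner_add_right, real_inner_smul_right, hzw, real_inner_self_eq_norm_sq]
        ring
  have hz0 : z = 0 := by
    by_contra hzne
    have hzp : 0 < ‖z‖ := norm_pos_iff.2 hzne
    have h1 := rot_aux w u z r hr hwr hloc hwz
    have h2 : ∀ᶠ t : ℝ in 𝓝 0, t * a < r ^ 2 := by
      have : Continuous (fun t : ℝ => t * a) := by fun_prop
      exact this.continuousAt.eventually_lt_const (by simp; positivity)
    obtain ⟨t, ⟨h1, h2⟩, ht⟩ := (((h1.and h2).filter_mono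
      (nhdsWithin_le_nhds (s := Set.Ioi (0 : ℝ)))).and self_mem_nhdsWithin).exists
    have ht : 0 < t := ht
    rw [hzu] at h1
    have h3 : 0 < t * ‖z‖ ^ 2 * (r ^ 2 - t * a) := by
      have := sub_pos.2 h2
      positivity
    nlinarith
  have huw : u = (a / r ^ 2) • w := sub_eq_zero.1 hz0
  have hc : 0 ≤ a / r ^ 2 := by positivity
  generalize a / r ^ 2 = c at huw hc
  have hc0 : c ≠ 0 := by
    rintro rfl
    exact hu (by simpa using huw)
  rw [huw, norm_smul, hwr, Real.norm_of_nonneg hc, smul_smul]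
  have : r / (c * r) * c = 1 := by field_simp
  rw [this, one_smul]



/-- Anti-bridge lemma, second part. Assume d ≥ 2 and s ≥ 0. If
x ∈ V ∩ B_s(p) maximizes the distance to q over V ∩ B_s(p) and x lies in the topological
interior of V, then x = p + √s·(p − q)/‖p − q‖; in particular x lies on the anti-bridge
of (V, p, q). -/
theorem stmt_13 {d : ℕ} (hd : 2 ≤ d) (V : Set (EuclideanSpace ℝ (Fin d)))
    (hVne : V.Nonempty) (hVcl : IsClosed V) (hVcx : Convex ℝ V)
    (p q : EuclideanSpace ℝ (Fin d)) (hpq : p ≠ q)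
    (s : ℝ) (hs : 0 ≤ s)
    (x : EuclideanSpace ℝ (Fin d))
    (hx : x ∈ V ∩ Metric.closedBall p (Real.sqrt s))
    (hmax : ∀ y ∈ V ∩ Metric.closedBall p (Real.sqrt s), ‖y - q‖ ≤ ‖x - q‖)
    (hint : x ∈ interior V) :
    x = p + (Real.sqrt s / ‖p - q‖) • (p - q) ∧
    x ∈ V ∩ {z : EuclideanSpace ℝ (Fin d) | ∃ t : ℝ, 0 ≤ t ∧ z = p + t • (p - q)} := by

  have hx2 : ‖x - p‖ ≤ Real.sqrt s := by
    have := hx.2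
    rwa [Metric.mem_closedBall, dist_eq_norm] at this
  have hE : x - p = (Real.sqrt s / ‖p - q‖) • (p - q) := by
    apply core_aux hd _ _ (sub_ne_zero.2 hpq) _ hx2
    have hV : V ∈ nhds x := mem_interior_iff_mem_nhds.1 hint
    have ht : Filter.Tendsto (fun y => y + p) (nhds (x - p)) (nhds x) := by
      have : Continuous (fun y : EuclideanSpace ℝ (Fin d) => y + p) := by fun_prop
      simpa using this.tendsto (x - p)
    filter_upwards [ht.eventually hV] with y hy hyr
    have := hmax (y + p) ⟨hy, by simpa [Metric.mem_closedBall, dist_eq_norm] using hyr⟩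
    simpa [add_sub_assoc] using this
  have hX : x = p + (Real.sqrt s / ‖p - q‖) • (p - q) := by
    rw [← hE]; abel
  exact ⟨hX, hx.1, _, by positivity, hX⟩
end

section
/- Define e : [s0, s1] → ℝ by e(s) := ‖q − γ_s‖². Then e is continuous and nonincreasing, e(s1) = r1, and for every s ∈ [s0, s1] and every r ≥ 0, V ∩ B_s(p) ∩ B_r(q) ≠ ∅ if and only if r ≥ e(s). (That is, e(s) is the minimal r-value for which the intersection is nonempty, equal to the squared distance of q to the set V ∩ B_s(p).) -/
/-- Define e(s) := ‖q − γ_s‖² on [s0, s1]. Then e is continuous and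
nonincreasing, e(s1) = r1, and for every s ∈ [s0, s1] and every r ≥ 0,
V ∩ B_s(p) ∩ B_r(q) ≠ ∅ iff r ≥ e(s). -/
theorem stmt_16 {d : ℕ} (V : Set (EuclideanSpace ℝ (Fin d)))
    (hVne : V.Nonempty) (hVcl : IsClosed V) (hVcx : Convex ℝ V)
    (p q phat qhat : EuclideanSpace ℝ (Fin d))
    (hphat_mem : phat ∈ V) (hphat_min : ∀ y ∈ V, ‖p - phat‖ ≤ ‖p - y‖)
    (hqhat_mem : qhat ∈ V) (hqhat_min : ∀ y ∈ V, ‖q - qhat‖ ≤ ‖q - y‖)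
    (s0 s1 r1 : ℝ)
    (hs0 : s0 = ‖p - phat‖ ^ 2) (hs1 : s1 = ‖p - qhat‖ ^ 2) (hr1 : r1 = ‖q - qhat‖ ^ 2)
    (γ : ℝ → EuclideanSpace ℝ (Fin d))
    (hγmem : ∀ s ∈ Set.Icc s0 s1, γ s ∈ V ∩ Metric.closedBall p (Real.sqrt s))
    (hγmin : ∀ s ∈ Set.Icc s0 s1,
      ∀ y ∈ V ∩ Metric.closedBall p (Real.sqrt s), ‖q - γ s‖ ≤ ‖q - y‖)
    (e : ℝ → ℝ) (he : ∀ s ∈ Set.Icc s0 s1, e s = ‖q - γ s‖ ^ 2) :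
    ContinuousOn e (Set.Icc s0 s1) ∧
    AntitoneOn e (Set.Icc s0 s1) ∧
    e s1 = r1 ∧
    ∀ s ∈ Set.Icc s0 s1, ∀ r : ℝ, 0 ≤ r →
      ((V ∩ Metric.closedBall p (Real.sqrt s) ∩ Metric.closedBall q (Real.sqrt r)).Nonempty ↔
        e s ≤ r) := by
  have hs0n : 0 ≤ s0 := by rw [hs0]; positivity
  have hs1n : 0 ≤ s1 := by rw [hs1]; positivity
  have h01 : s0 ≤ s1 := by
    rw [hs0, hs1]
    have := hphat_min qhat hqhat_mem
    gcongr
  have hball : ∀ (x y : EuclideanSpace ℝ (Fin d)) (s : ℝ), 0 ≤ s →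
      (y ∈ Metric.closedBall x (Real.sqrt s) ↔ ‖x - y‖ ^ 2 ≤ s) := by
    intro x y s hs
    rw [Metric.mem_closedBall, dist_comm, dist_eq_norm, Real.le_sqrt (norm_nonneg _) hs]
  have hinner : ∀ y ∈ V, inner ℝ (p - phat) (y - phat) ≤ 0 := by
    refine (norm_eq_iInf_iff_real_inner_le_zero hVcx hphat_mem).1 ?_
    haveI : Nonempty V := ⟨⟨phat, hphat_mem⟩⟩
    refine le_antisymm (le_ciInf fun w => hphat_min w w.2) ?_
    exact ciInf_le (f := fun w : V => ‖p - w‖)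
      ⟨0, by rintro _ ⟨w, rfl⟩; exact norm_nonneg _⟩ ⟨phat, hphat_mem⟩
  have hD : ∀ y ∈ V, ‖y - phat‖ ^ 2 ≤ ‖p - y‖ ^ 2 - s0 := by
    intro y hy
    have h1 := hinner y hy
    have h2 : ‖p - y‖ ^ 2 = ‖p - phat‖ ^ 2 - 2 * inner ℝ (p - phat) (y - phat)
        + ‖y - phat‖ ^ 2 := by
      rw [← norm_sub_sq_real]; congr 2; abel
    rw [hs0]; linarith
  have hmono : ∀ s ∈ Set.Icc s0 s1, ∀ t ∈ Set.Icc s0 s1, s ≤ t →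
      ‖q - γ t‖ ≤ ‖q - γ s‖ := by
    intro s hs t ht hst
    refine hγmin t ht _ ⟨(hγmem s hs).1, ?_⟩
    exact Metric.closedBall_subset_closedBall (Real.sqrt_le_sqrt hst) (hγmem s hs).2
  have hhold : ∀ s ∈ Set.Icc s0 s1, ∀ t ∈ Set.Icc s0 s1, s < t →
      ‖q - γ s‖ ≤ ‖q - γ t‖ + Real.sqrt (t - s) := by
    intro s hs t ht hst
    have hpos : 0 < t - s0 := by linarith [hs.1]
    obtain ⟨l, hl⟩ : ∃ l, l = (t - s) / (t - s0) := ⟨_, rfl⟩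
    have hl0 : 0 ≤ l := by rw [hl]; exact div_nonneg (by linarith) hpos.le
    have hl1 : l ≤ 1 := by rw [hl, div_le_one hpos]; linarith [hs.1]
    have hlm : l * (t - s0) = t - s := by rw [hl]; field_simp
    have hγt := (hball p (γ t) t (by linarith [ht.1])).1 (hγmem t ht).2
    have hDt := hD _ (hγmem t ht).1
    have hz : (1 - l) • γ t + l • phat ∈ V :=
      hVcx (hγmem t ht).1 hphat_mem (by linarith) hl0 (by ring)
    have hzn : ‖p - ((1 - l) • γ t + l • phat)‖ ≤
        (1 - l) * ‖p - γ t‖ + l * ‖p - phat‖ := by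
      have : p - ((1 - l) • γ t + l • phat) = (1 - l) • (p - γ t) + l • (p - phat) := by
        module
      rw [this]
      refine (norm_add_le _ _).trans ?_
      rw [norm_smul, norm_smul, Real.norm_of_nonneg hl0,
        Real.norm_of_nonneg (by linarith : (0:ℝ) ≤ 1 - l)]
    have hzs : ‖p - ((1 - l) • γ t + l • phat)‖ ^ 2 ≤ s := by
      have h1 := pow_le_pow_left₀ (norm_nonneg _) hzn 2
      have h2 : 0 ≤ l * (1 - l) * (‖p - γ t‖ - ‖p - phat‖) ^ 2 :=
        mul_nonneg (mul_nonneg hl0 (by linarith)) (sq_nonneg _)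
      have h3 : (1 - l) * ‖p - γ t‖ ^ 2 ≤ (1 - l) * t :=
        mul_le_mul_of_nonneg_left hγt (by linarith)
      rw [hs0] at hlm
      nlinarith
    have hm := hγmin s hs _ ⟨hz, (hball p _ s (by linarith [hs.1])).2 hzs⟩
    refine hm.trans ?_
    have hd : q - ((1 - l) • γ t + l • phat) = (q - γ t) + l • (γ t - phat) := by module
    rw [hd]
    refine (norm_add_le _ _).trans ?_
    gcongr
    apply Real.le_sqrt_of_sq_le
    rw [norm_smul, Real.norm_of_nonneg hl0, mul_pow]
    have h1 : l ^ 2 * ‖γ t - phat‖ ^ 2 ≤ l ^ 2 * (t - s0) :=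
      mul_le_mul_of_nonneg_left (by linarith) (sq_nonneg _)
    have h2 : l ^ 2 * (t - s0) = l * (t - s) := by rw [← hlm]; ring
    have h3 : l * (t - s) ≤ 1 * (t - s) := mul_le_mul_of_nonneg_right hl1 (by linarith)
    linarith
  have hdist : ∀ s ∈ Set.Icc s0 s1, ∀ t ∈ Set.Icc s0 s1,
      |‖q - γ t‖ - ‖q - γ s‖| ≤ Real.sqrt |t - s| := by
    intro s hs t ht
    rcases lt_trichotomy s t with h | h | h
    · have h1 := hmono s hs t ht h.le
      have h2 := hhold s hs t ht h
      rw [abs_of_nonpos (by linarith), abs_of_pos (by linarith : 0 < t - s)]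
      linarith
    · subst h; simp
    · have h1 := hmono t ht s hs h.le
      have h2 := hhold t ht s hs h
      rw [abs_of_nonneg (by linarith), abs_of_neg (by linarith : t - s < 0), neg_sub]
      linarith
  have hcont : ContinuousOn (fun s => ‖q - γ s‖) (Set.Icc s0 s1) := by
    intro s hs
    rw [ContinuousWithinAt, tendsto_iff_dist_tendsto_zero]
    have hlim : Filter.Tendsto (fun t : ℝ => Real.sqrt |t - s|)
        (nhdsWithin s (Set.Icc s0 s1)) (nhds 0) := by
      have hc : Continuous (fun t : ℝ => Real.sqrt |t - s|) := by fun_prop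
      have := hc.tendsto s
      simp only [sub_self, abs_zero, Real.sqrt_zero] at this
      exact this.mono_left nhdsWithin_le_nhds
    refine squeeze_zero' (Filter.Eventually.of_forall fun _ => dist_nonneg) ?_ hlim
    filter_upwards [self_mem_nhdsWithin] with t ht
    rw [Real.dist_eq]
    exact hdist s hs t ht
  refine ⟨(hcont.pow 2).congr he, ?_, ?_, ?_⟩
  · intro s hs t ht hst
    rw [he s hs, he t ht]
    have := hmono s hs t ht hst
    gcongr
  · have hm : s1 ∈ Set.Icc s0 s1 := ⟨h01, le_rfl⟩
    rw [he s1 hm, hr1]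
    have h1 := hγmin s1 hm qhat ⟨hqhat_mem, (hball p qhat s1 hs1n).2 hs1.ge⟩
    have h2 := hqhat_min _ (hγmem s1 hm).1
    rw [le_antisymm h1 h2]
  · intro s hs r hr
    rw [he s hs]
    constructor
    · rintro ⟨y, hy, hyq⟩
      have h1 := hγmin s hs y hy
      exact (pow_le_pow_left₀ (norm_nonneg _) h1 2).trans ((hball q y r hr).1 hyq)
    · intro h
      exact ⟨γ s, hγmem s hs, (hball q _ r hr).2 h⟩
end

section
/- For all s, r ≥ 0, the intersection I_s ∩ J_r is nonempty if and only if r + s ≥ 1. Moreover, the region R := {(s, r) ∈ [0,∞)² : r + s ≥ 1} is not a finite union of upper-right quadrants: there is no finite set F ⊆ ℝ² such that R = ⋃_{(a,b) ∈ F} {(s, r) ∈ [0,∞)² : s ≥ a and r ≥ b}. -/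
/-- In ℝ with I_s = [1−s, 1+s] and J_r = [−r, r]: for all s, r ≥ 0,
I_s ∩ J_r ≠ ∅ iff r + s ≥ 1; moreover the region R = {(s,r) ∈ [0,∞)² : r + s ≥ 1}
is not a finite union of upper-right quadrants. -/
theorem stmt_18 :
    (∀ s r : ℝ, 0 ≤ s → 0 ≤ r →
      ((Set.Icc (1 - s) (1 + s) ∩ Set.Icc (-r) r).Nonempty ↔ 1 ≤ r + s)) ∧
    ¬ ∃ F : Set (ℝ × ℝ), F.Finite ∧
      {x : ℝ × ℝ | 0 ≤ x.1 ∧ 0 ≤ x.2 ∧ 1 ≤ x.1 + x.2} =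
        ⋃ ab ∈ F, {x : ℝ × ℝ | 0 ≤ x.1 ∧ 0 ≤ x.2 ∧ ab.1 ≤ x.1 ∧ ab.2 ≤ x.2} := by
  constructor
  · intro s r hs hr
    constructor
    · rintro ⟨x, ⟨h1, h2⟩, h3, h4⟩
      linarith
    · intro h
      refine ⟨min r (1 + s), ⟨le_min (by linarith) (by linarith), min_le_right _ _⟩,
        le_min (by linarith) (by linarith), min_le_left _ _⟩
  · rintro ⟨F, hF, hR⟩
    have hsub : Set.Ioo (0 : ℝ) 1 ⊆ Prod.fst '' F := by
      rintro t ⟨h0, h1⟩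
      have hm : ((t, 1 - t) : ℝ × ℝ) ∈
          {x : ℝ × ℝ | 0 ≤ x.1 ∧ 0 ≤ x.2 ∧ 1 ≤ x.1 + x.2} :=
        ⟨h0.le, by simp only; linarith, by simp only; linarith⟩
      rw [hR] at hm
      simp only [Set.mem_iUnion, Set.mem_setOf_eq] at hm
      obtain ⟨ab, hab, -, -, ha, hb⟩ := hm
      have hq : ((max ab.1 0, max ab.2 0) : ℝ × ℝ) ∈
          {x : ℝ × ℝ | 0 ≤ x.1 ∧ 0 ≤ x.2 ∧ 1 ≤ x.1 + x.2} := by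
        rw [hR]
        simp only [Set.mem_iUnion, Set.mem_setOf_eq]
        exact ⟨ab, hab, le_max_right _ _, le_max_right _ _, le_max_left _ _, le_max_left _ _⟩
      have hs : 1 ≤ max ab.1 0 + max ab.2 0 := hq.2.2
      have h2 : max ab.2 0 ≤ 1 - t := max_le hb (by linarith)
      refine ⟨ab, hab, le_antisymm ha ?_⟩
      have h3 : t ≤ max ab.1 0 := by linarith
      rcases le_max_iff.mp h3 with h | h
      · exact h
      · linarith
    exact Set.Ioo_infinite (zero_lt_one' ℝ) ((hF.image _).subset hsub)
end
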